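/- arXiv:1906.01898 — 3 statements merged into one kernel-verified Lean document; each statement's English description precedes it below -/
import Mathlib

section
/- Let Ω be a compact metric space and T : Ω → Ω a homeomorphism such that (Ω,T) is minimal (every T-orbit is dense in Ω). Let f_n : Ω → ℝ, n ∈ ℕ, be continuous functions satisfying f_{n+m}(ω) ≤ f_n(ω) + f_m(T^n ω) for all ω ∈ Ω and all n,m ∈ ℕ. If for every ω ∈ Ω the limit φ(ω) := lim_{n→∞} f_n(ω)/n exists, then φ is constant on Ω and the convergence f_n/n → φ is uniform on Ω. -/
open Filter Topology MeasureTheory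

noncomputable section

abbrev SL2 := Matrix.SpecialLinearGroup (Fin 2) ℝ

/-- Operator norm of a 2×2 real matrix acting on Euclidean ℝ². -/
def matNorm (M : Matrix (Fin 2) (Fin 2) ℝ) : ℝ :=
  ‖LinearMap.toContinuousLinearMap (Matrix.toEuclideanLin M)‖

/-- Norm of an element of SL(2,ℝ). -/
def slNorm (M : SL2) : ℝ := matNorm (M : Matrix (Fin 2) (Fin 2) ℝ)

/-- Action of an SL(2,ℝ) matrix on a euclidean vector. -/
def slAct (M : SL2) (v : EuclideanSpace ℝ (Fin 2)) : EuclideanSpace ℝ (Fin 2) :=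
  Matrix.toEuclideanLin (M : Matrix (Fin 2) (Fin 2) ℝ) v

variable {𝒜 : Type*}

/-- The shift by `k` on two-sided sequences; `shift 1` is the left shift `T`. -/
def shift (k : ℤ) (ω : ℤ → 𝒜) : ℤ → 𝒜 := fun n => ω (n + k)

/-- `Ω ⊆ 𝒜^ℤ` is a subshift: nonempty, closed, invariant under the shift and its inverse. -/
structure IsSubshift [TopologicalSpace 𝒜] (Ω : Set (ℤ → 𝒜)) : Prop where
  nonempty : Ω.Nonempty
  closed : IsClosed Ω
  shift_mem : ∀ ω ∈ Ω, shift 1 ω ∈ Ω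
  shift_neg_mem : ∀ ω ∈ Ω, shift (-1) ω ∈ Ω

/-- The word `ω(k) ω(k+1) ⋯ ω(k+n-1)`. -/
def word (ω : ℤ → 𝒜) (k : ℤ) (n : ℕ) : List 𝒜 := (List.range n).map fun i => ω (k + i)

/-- `v` occurs in `ω` at position `k`. -/
def occursAt (v : List 𝒜) (ω : ℤ → 𝒜) (k : ℤ) : Prop := v = word ω k v.length

/-- The words of length `n` occurring in elements of `Ω`. -/
def WordsN (Ω : Set (ℤ → 𝒜)) (n : ℕ) : Set (List 𝒜) :=
  {v | ∃ ω ∈ Ω, ∃ k : ℤ, v = word ω k n}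

/-- The (nonempty) finite words occurring in elements of `Ω`. -/
def Words (Ω : Set (ℤ → 𝒜)) : Set (List 𝒜) :=
  {v | 1 ≤ v.length ∧ v ∈ WordsN Ω v.length}

/-- `A` is locally constant on `Ω`: its value depends only on a finite window around 0. -/
def LocConstOn (Ω : Set (ℤ → 𝒜)) {β : Type*} (A : (ℤ → 𝒜) → β) : Prop :=
  ∃ N : ℕ, ∀ ω ∈ Ω, ∀ ρ ∈ Ω, (∀ i : ℤ, |i| ≤ (N : ℤ) → ω i = ρ i) → A ω = A ρ

/-- The positive part of the cocycle: `cocycleP A n ω = A(T^{n-1}ω) ⋯ A(ω)`. -/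
def cocycleP (A : (ℤ → 𝒜) → SL2) : ℕ → (ℤ → 𝒜) → SL2
  | 0, _ => 1
  | n + 1, ω => A (shift n ω) * cocycleP A n ω

/-- The full cocycle over the shift, `n ∈ ℤ`. -/
def cocycle (A : (ℤ → 𝒜) → SL2) (n : ℤ) (ω : ℤ → 𝒜) : SL2 :=
  if 0 ≤ n then cocycleP A n.toNat ω else (cocycleP A (-n).toNat (shift n ω))⁻¹

/-- `A` is uniform on `Ω`: `(1/n) log‖A(n,ω)‖` converges uniformly on `Ω`. -/
def IsUniform (Ω : Set (ℤ → 𝒜)) (A : (ℤ → 𝒜) → SL2) : Prop :=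
  ∃ Λ : ℝ, TendstoUniformlyOn
    (fun (n : ℕ) (ω : ℤ → 𝒜) => Real.log (slNorm (cocycle A n ω)) / n)
    (fun _ => Λ) atTop Ω

/-- The number of occurrences of `v` in `ω(1)⋯ω(n)`. -/
def occCount (v : List 𝒜) (ω : ℤ → 𝒜) (n : ℕ) : ℕ :=
  Set.ncard {k : ℤ | 1 ≤ k ∧ k + v.length ≤ (n : ℤ) + 1 ∧ occursAt v ω k}

/-- Uniform existence of word frequencies (unique ergodicity). -/
def UniformWordFreq (Ω : Set (ℤ → 𝒜)) : Prop :=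
  ∀ v ∈ Words Ω, ∃ ν : ℝ, TendstoUniformlyOn
    (fun (n : ℕ) (ω : ℤ → 𝒜) => (occCount v ω n : ℝ) / n) (fun _ => ν) atTop Ω

/-- Minimality: every orbit is dense in `Ω`. -/
def IsMinimalSubshift [TopologicalSpace 𝒜] (Ω : Set (ℤ → 𝒜)) : Prop :=
  ∀ ω ∈ Ω, ∀ ρ ∈ Ω, ρ ∈ closure {σ : ℤ → 𝒜 | ∃ k : ℤ, σ = shift k ω}

/-- Condition (α): for all large `n`, the words of length `n` of `Ω` are exactly the
words `lead j (-k+1) ⋯ lead j (-k+n)`, `0 ≤ k ≤ n`, of the leading words. -/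
def CondAlpha (Ω : Set (ℤ → 𝒜)) {r : ℕ} (lead : Fin r → (ℤ → 𝒜)) : Prop :=
  (∀ j, lead j ∈ Ω) ∧ ∃ N : ℕ, ∀ n : ℕ, N ≤ n →
    WordsN Ω n = {v | ∃ j : Fin r, ∃ k : ℕ, k ≤ n ∧ v = word (lead j) (1 - (k : ℤ)) n}

/-- Condition (β): for every locally constant cocycle the Lyapunov limits along the
leading words exist in both time directions and all have the same value. -/
def CondBeta (Ω : Set (ℤ → 𝒜)) {r : ℕ} (lead : Fin r → (ℤ → 𝒜)) : Prop :=
  ∀ A : (ℤ → 𝒜) → SL2, LocConstOn Ω A → ∃ Λ : ℝ, ∀ j : Fin r,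
    Tendsto (fun n : ℕ => Real.log (slNorm (cocycle A n (lead j))) / n) atTop (𝓝 Λ) ∧
    Tendsto (fun n : ℕ => Real.log (slNorm (cocycle A (-(n : ℤ)) (lead j))) / n) atTop (𝓝 Λ)

/-- Condition (γ): along the leading words, for every locally constant cocycle and every
nonzero vector, at most one of the two one-sided exponents is negative. -/
def CondGamma (Ω : Set (ℤ → 𝒜)) {r : ℕ} (lead : Fin r → (ℤ → 𝒜)) : Prop :=
  ∀ A : (ℤ → 𝒜) → SL2, LocConstOn Ω A → ∀ j : Fin r,
    ∀ v : EuclideanSpace ℝ (Fin 2), v ≠ 0 →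
    ¬ (limsup (fun n : ℕ => Real.log ‖slAct (cocycle A n (lead j)) v‖ / n) atTop < 0 ∧
       limsup (fun n : ℕ => Real.log ‖slAct (cocycle A (-(n : ℤ)) (lead j)) v‖ / n) atTop < 0)

/-- The leading sequence condition (LSC). -/
def SatisfiesLSC (Ω : Set (ℤ → 𝒜)) : Prop :=
  ∃ (r : ℕ) (lead : Fin r → (ℤ → 𝒜)), CondAlpha Ω lead ∧ CondBeta Ω lead ∧ CondGamma Ω lead

/-- `F` is subadditive on the words of `Ω`. -/
def SubadditiveOn (Ω : Set (ℤ → 𝒜)) (F : List 𝒜 → ℝ) : Prop :=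
  ∀ x y : List 𝒜, x ∈ Words Ω → y ∈ Words Ω → (x ++ y) ∈ Words Ω → F (x ++ y) ≤ F x + F y

/-- `Fb` is the asymptotic mean `lim_n max { F x / n : x ∈ W(Ω)_n }` of `F`. -/
def IsAsympMean (Ω : Set (ℤ → 𝒜)) (F : List 𝒜 → ℝ) (Fb : ℝ) : Prop :=
  Tendsto (fun n : ℕ => sSup ((fun x => F x / n) '' WordsN Ω n)) atTop (𝓝 Fb)

/-- Maximal number of pairwise disjoint occurrences of `v` in `ω(1)⋯ω(n)`. -/
def disjCount (v : List 𝒜) (ω : ℤ → 𝒜) (n : ℕ) : ℕ :=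
  sSup {m : ℕ | ∃ S : Finset ℤ, S.card = m ∧
    (∀ k ∈ S, 1 ≤ k ∧ k + v.length ≤ (n : ℤ) + 1 ∧ occursAt v ω k) ∧
    (∀ k ∈ S, ∀ l ∈ S, k ≠ l → (v.length : ℤ) ≤ |k - l|)}

/-- Condition (PQ) for the one-sided word `p(1)p(2)⋯`. -/
def CondPQ (p : ℤ → 𝒜) : Prop :=
  ∃ c : ℝ, 0 < c ∧ ∀ m : ℕ, 1 ≤ m →
    c ≤ liminf (fun n : ℕ => (m : ℝ) / n * disjCount (word p 1 m) p n) atTop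

/-- ℓ²(ℤ) over the reals. -/
abbrev Ell2Z : Type := lp (fun _ : ℤ => ℝ) 2

/-- `H` acts as the Jacobi operator with coefficients `f, g` at `ω`. -/
def IsJacobiAt (f g : (ℤ → 𝒜) → ℝ) (ω : ℤ → 𝒜) (H : Ell2Z →L[ℝ] Ell2Z) : Prop :=
  ∀ u : Ell2Z, ∀ n : ℤ,
    (H u : ∀ _ : ℤ, ℝ) n =
      f (shift n ω) * (u : ∀ _ : ℤ, ℝ) (n - 1) + f (shift (n + 1) ω) * (u : ∀ _ : ℤ, ℝ) (n + 1)
        + g (shift n ω) * (u : ∀ _ : ℤ, ℝ) n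

/-- The pair `(f,g)` is periodic on `Ω`. -/
def PeriodicPair (Ω : Set (ℤ → 𝒜)) (f g : (ℤ → 𝒜) → ℝ) : Prop :=
  ∃ P : ℕ, 1 ≤ P ∧ ∀ ω ∈ Ω, f (shift (P : ℤ) ω) = f ω ∧ g (shift (P : ℤ) ω) = g ω

/-- `S ⊆ ℝ` is a Cantor set of Lebesgue measure zero: compact, empty interior,
no isolated points, Lebesgue measure zero. -/
def IsMeasureZeroCantor (S : Set ℝ) : Prop :=
  IsCompact S ∧ interior S = ∅ ∧ Perfect S ∧ volume S = 0

/-- `n` copies of `x` separated by `n-1` copies of the letter `l`. -/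
def sepJoin (x : List 𝒜) (l : 𝒜) (m : ℕ) : List 𝒜 :=
  (List.replicate (m - 1) (x ++ [l])).flatten ++ x

/-- `Blk a nseq (k+1)` is the block `block(k)` of the simple Toeplitz construction
(with `Blk a nseq 0 = block(-1) = ε`). -/
def Blk (a : ℕ → 𝒜) (nseq : ℕ → ℕ) : ℕ → List 𝒜
  | 0 => []
  | k + 1 => sepJoin (Blk a nseq k) (a k) (nseq k)

/-- `p(1)p(2)⋯` is the one-sided word `block(∞)`: every block is a prefix of it. -/
def IsBlockInf (a : ℕ → 𝒜) (nseq : ℕ → ℕ) (p : ℤ → 𝒜) : Prop :=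
  ∀ k : ℕ, word p 1 (Blk a nseq k).length = Blk a nseq k

/-- The simple Toeplitz subshift generated by `block(∞) = p(1)p(2)⋯`: all two-sided
sequences whose finite subwords all occur in `block(∞)`. -/
def toeplitzΩ (p : ℤ → 𝒜) : Set (ℤ → 𝒜) :=
  {ω | ∀ (i : ℤ) (n : ℕ), ∃ l : ℤ, 1 ≤ l ∧ word ω i n = word p l n}

/-- The eventual alphabet: letters occurring infinitely often in `(a_k)`. -/
def EvAlph (a : ℕ → 𝒜) : Set 𝒜 := {x | ∀ K : ℕ, ∃ k, K ≤ k ∧ a k = x}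

/-- The leading word `p^R v | p`: equals `p(n+1)` for `n ≥ 0`, carries the word `v` on
positions `-|v|, …, -1`, and equals `p(-(n+|v|))` for `n < -|v|`. -/
def leadWordGen (p : ℤ → 𝒜) (v : List 𝒜) : ℤ → 𝒜 := fun n =>
  if 0 ≤ n then p (n + 1)
  else if -(v.length : ℤ) ≤ n then v.getD (n + v.length).toNat (p 1)
  else p (-(n + v.length))

/-- The Gauss map. -/
def gaussMap (x : ℝ) : ℝ := 1 / x - ⌊1 / x⌋

/-- `cfSeq α n` is the continued fraction coefficient `a_{n+1}` of `α`. -/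
def cfSeq (α : ℝ) (n : ℕ) : ℕ := ⌊1 / (gaussMap^[n] α)⌋₊

/-- The standard Sturmian words: `sturmW α (n+1) = s_n`, `sturmW α 0 = s_{-1} = 1`,
`sturmW α 1 = s_0 = 0`, `s_1 = s_0^{a_1 - 1} s_{-1}`, `s_n = s_{n-1}^{a_n} s_{n-2}`. -/
def sturmW (α : ℝ) : ℕ → List (Fin 2)
  | 0 => [1]
  | 1 => [0]
  | 2 => List.replicate (cfSeq α 0 - 1) (0 : Fin 2) ++ [1]
  | n + 3 => (List.replicate (cfSeq α (n + 1)) (sturmW α (n + 2))).flatten ++ sturmW α (n + 1)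

/-- The Sturmian subshift with rotation number `α`: all two-sided sequences whose finite
subwords occur in some `s_n`. -/
def sturmΩ (α : ℝ) : Set (ℤ → Fin 2) :=
  {ω | ∀ (i : ℤ) (n : ℕ), ∃ m : ℕ, word ω i n <:+: sturmW α m}

/-- The positive cocycle of a map `A` over a transformation `T`:
`cocycleH T A n ω = A(T^{n-1}ω) ⋯ A(ω)`. -/
def cocycleH {Ω : Type*} (T : Ω → Ω) (A : Ω → SL2) : ℕ → Ω → SL2
  | 0, _ => 1
  | n + 1, ω => A (T^[n] ω) * cocycleH T A n ω

end

/-!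
By Baire's theorem, the pointwise convergent continuous functions `f n / n` are, from some index on,
within `ε` of a single constant `c` on some nonempty open set `U`. By compactness and minimality
every orbit enters `U` within a bounded number of steps. Moving a point forward into `U` bounds
`f n` from above at that point by subadditivity, and moving a point of `U` forward to a given point
bounds `f n` from below there; both cost only a bounded error, which disappears after division
by `n`. Hence `f n / n` is eventually within `2 * ε` of `c` on the whole space.
-/

section UniformLimits

variable {X Y : Type*}

theorem exists_isOpen_eventually_dist_le [TopologicalSpace X] [BaireSpace X] [Nonempty X]
    [PseudoMetricSpace Y] {g : ℕ → X → Y} (hg : ∀ n, Continuous (g n))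
    (hcauchy : ∀ x, CauchySeq fun n => g n x) {ε : ℝ} (hε : 0 < ε) :
    ∃ U : Set X, IsOpen U ∧ U.Nonempty ∧ ∃ c, ∀ᶠ n in atTop, ∀ x ∈ U, dist (g n x) c ≤ ε := by
  let A : ℕ → Set X := fun M => {x | ∀ n ≥ M, dist (g n x) (g M x) ≤ ε / 2}
  have hA_closed (M : ℕ) : IsClosed (A M) := by
    simp only [A, Set.ofPred_forall]
    exact isClosed_biInter fun n _ => isClosed_le ((hg n).dist (hg M)) continuous_const
  have hA_cover : ⋃ M, A M = Set.univ := Set.iUnion_eq_univ_iff.2 fun x =>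
    (Metric.cauchySeq_iff'.1 (hcauchy x) (ε / 2) (half_pos hε)).imp
      fun _ hM n hn => (hM n hn).le
  obtain ⟨M, u, hu⟩ := nonempty_interior_of_iUnion_of_closed hA_closed hA_cover
  refine ⟨interior (A M) ∩ g M ⁻¹' Metric.ball (g M u) (ε / 2),
    isOpen_interior.inter (Metric.isOpen_ball.preimage (hg M)),
    ⟨u, hu, Metric.mem_ball_self (half_pos hε)⟩, g M u, ?_⟩
  filter_upwards [eventually_ge_atTop M] with n hn x hx
  calc
    dist (g n x) (g M u) ≤ dist (g n x) (g M x) + dist (g M x) (g M u) := dist_triangle _ _ _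
    _ ≤ ε / 2 + ε / 2 := add_le_add (interior_subset hx.1 n hn) (Metric.mem_ball.1 hx.2).le
    _ = ε := add_halves ε

theorem eq_and_tendstoUniformly_of_eventually_dist_le {ι : Type*} {l : Filter ι} [l.NeBot]
    [MetricSpace Y] {F : ι → X → Y} {φ : X → Y} (hφ : ∀ x, Tendsto (F · x) l (𝓝 (φ x)))
    (hF : ∀ ε > 0, ∃ c, ∀ᶠ n in l, ∀ x, dist (F n x) c ≤ ε) :
    (∀ x y, φ x = φ y) ∧ TendstoUniformly F φ l := by
  have hφ_dist {ε : ℝ} {c : Y} (hc : ∀ᶠ n in l, ∀ x, dist (F n x) c ≤ ε) (x : X) :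
      dist (φ x) c ≤ ε :=
    le_of_tendsto ((hφ x).dist tendsto_const_nhds) (hc.mono fun _ hn => hn x)
  refine ⟨fun x y => eq_of_forall_dist_le fun ε hε => ?_, ?_⟩
  · obtain ⟨c, hc⟩ := hF (ε / 2) (half_pos hε)
    linarith [dist_triangle_right (φ x) (φ y) c, hφ_dist hc x, hφ_dist hc y]
  · refine Metric.tendstoUniformly_iff.2 fun ε hε => ?_
    obtain ⟨c, hc⟩ := hF (ε / 3) (by positivity)
    filter_upwards [hc] with n hn x
    linarith [dist_triangle_right (φ x) (F n x) c, hφ_dist hc x, hn x]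

end UniformLimits

theorem iterate_toNat_eq_zpow {α : Type*} (σ : Equiv.Perm α) {n : ℤ} (hn : 0 ≤ n) (x : α) :
    σ^[n.toNat] x = (σ ^ n) x := by
  obtain ⟨k, rfl⟩ := Int.eq_ofNat_of_zero_le hn
  rw [Int.toNat_natCast, zpow_natCast, Equiv.Perm.coe_pow]

section MinimalMaps

variable {X : Type*} [TopologicalSpace X]

theorem exists_iterate_mem_of_denseRange [CompactSpace X] {T : X → X} (hT : Continuous T)
    (hmin : ∀ x, DenseRange fun n : ℕ => T^[n] x) {U : Set X} (hU : IsOpen U)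
    (hne : U.Nonempty) : ∃ N : ℕ, ∀ x, ∃ j ≤ N, T^[j] x ∈ U := by
  let V : ℕ → Set X := fun N => ⋃ j ≤ N, T^[j] ⁻¹' U
  have hV_open (N : ℕ) : IsOpen (V N) :=
    isOpen_biUnion fun j _ => hU.preimage (hT.iterate j)
  have hV_mono : Monotone V := fun _ _ hMN =>
    Set.iUnion₂_mono' fun j hj => ⟨j, hj.trans hMN, subset_rfl⟩
  have hV_cover : Set.univ ⊆ ⋃ N, V N := fun x _ =>
    let ⟨n, hn⟩ := (hmin x).exists_mem_open hU hne
    Set.mem_iUnion.2 ⟨n, Set.mem_iUnion₂.2 ⟨n, le_rfl, hn⟩⟩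
  obtain ⟨N, hN⟩ := isCompact_univ.elim_directed_cover V hV_open hV_cover hV_mono.directed_le
  exact ⟨N, fun x => by simpa [V] using hN (Set.mem_univ x)⟩

theorem denseRange_iterate {T : X → X} (hmin : ∀ x, DenseRange fun n : ℕ => T^[n] x)
    (N : ℕ) : DenseRange T^[N] := by
  rcases isEmpty_or_nonempty X with _ | ⟨⟨x⟩⟩
  · exact fun x => isEmptyElim x
  refine (hmin (T^[N] x)).mono ?_
  rintro _ ⟨n, rfl⟩
  exact ⟨T^[n] x, Function.Commute.iterate_iterate_self T N n x⟩

theorem toEquiv_zpow (T : X ≃ₜ X) (n : ℤ) : T.toEquiv ^ n = (T ^ n).toEquiv :=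
  (map_zpow (⟨⟨Homeomorph.toEquiv, rfl⟩, fun _ _ => rfl⟩ : (X ≃ₜ X) →* Equiv.Perm X) T n).symm

theorem denseRange_iterate_of_denseRange_zpow [CompactSpace X] (T : X ≃ₜ X)
    (hmin : ∀ x, DenseRange fun n : ℤ => (T.toEquiv ^ n) x) (x : X) :
    DenseRange fun n : ℕ => T^[n] x := by
  refine dense_iff_inter_open.2 fun U hU hne => ?_
  let V : ℕ → Set X := fun K => ⋃ n ≥ -(K : ℤ), (T.toEquiv ^ n) ⁻¹' U
  have hV_open (K : ℕ) : IsOpen (V K) := isOpen_biUnion fun n _ =>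
    hU.preimage (by rw [toEquiv_zpow]; exact (T ^ n).continuous)
  have hV_mono : Monotone V := fun _ _ hKL =>
    Set.iUnion₂_mono' fun n hn => ⟨n, by omega, subset_rfl⟩
  have hV_cover : Set.univ ⊆ ⋃ K, V K := fun y _ =>
    let ⟨n, hn⟩ := (hmin y).exists_mem_open hU hne
    Set.mem_iUnion.2 ⟨n.natAbs, Set.mem_iUnion₂.2 ⟨n, by omega, hn⟩⟩
  obtain ⟨K, hK⟩ := isCompact_univ.elim_directed_cover V hV_open hV_cover hV_mono.directed_le
  obtain ⟨n, hn, hnU⟩ : ∃ n ≥ -(K : ℤ), (T.toEquiv ^ n) ((T.toEquiv ^ (K : ℤ)) x) ∈ U := by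
    simpa [V] using hK (Set.mem_univ ((T.toEquiv ^ (K : ℤ)) x))
  refine ⟨_, ?_, (n + K).toNat, iterate_toNat_eq_zpow T.toEquiv (by omega) x⟩
  rwa [zpow_add, Equiv.Perm.mul_apply]

end MinimalMaps

/-- A subadditive cocycle over `T`: a sequence of real functions with
`f (n + m) ≤ f n + f m ∘ T^[n]`. -/
def IsSubadditiveCocycle {X : Type*} (T : X → X) (f : ℕ → X → ℝ) : Prop :=
  ∀ (x : X) (n m : ℕ), f (n + m) x ≤ f n x + f m (T^[n] x)

namespace IsSubadditiveCocycle

variable {X : Type*} {T : X → X} {f : ℕ → X → ℝ}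

theorem sub_natCast_mul (h : IsSubadditiveCocycle T f) (c : ℝ) :
    IsSubadditiveCocycle T fun n x => f n x - n * c := fun x n m => by
  push_cast
  linarith [h x n m]

section ReturnToSet

variable {U : Set X} {M N n : ℕ} {B ε : ℝ}

theorem le_add_mul_of_forall_mem (h : IsSubadditiveCocycle T f)
    (hU : ∀ k ≥ M, ∀ u ∈ U, f k u ≤ k * ε) (hB : ∀ j ≤ N, ∀ x, f j x ≤ B) (hε : 0 ≤ ε)
    (hreturn : ∀ x, ∃ j ≤ N, T^[j] x ∈ U) (hn : M + N ≤ n) (x : X) :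
    f n x ≤ B + n * ε := by
  obtain ⟨j, hj, hjU⟩ := hreturn x
  calc
    f n x = f (j + (n - j)) x := by rw [Nat.add_sub_cancel' (by omega)]
    _ ≤ f j x + f (n - j) (T^[j] x) := h x j (n - j)
    _ ≤ B + (n - j : ℕ) * ε := add_le_add (hB j hj x) (hU _ (by omega) _ hjU)
    _ ≤ B + n * ε := by gcongr; exact n.sub_le j

theorem neg_le_apply_iterate_of_forall_mem (h : IsSubadditiveCocycle T f)
    (hU : ∀ k ≥ M, ∀ u ∈ U, -(k * ε) ≤ f k u) (hB : ∀ j ≤ N, ∀ x, f j x ≤ B) (hε : 0 ≤ ε)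
    (hreturn : ∀ x, ∃ j ≤ N, T^[j] x ∈ U) (hn : M ≤ n) (x : X) :
    -(B + (n + N) * ε) ≤ f n (T^[N] x) := by
  obtain ⟨j, hj, hjU⟩ := hreturn x
  obtain ⟨k, rfl⟩ := Nat.exists_eq_add_of_le' hj
  have hsub : f (k + n) (T^[j] x) ≤ f k (T^[j] x) + f n (T^[k + j] x) := by
    rw [Function.iterate_add_apply]
    exact h _ k n
  have hlower : -((k + n : ℕ) * ε) ≤ f (k + n) (T^[j] x) := hU _ (by omega) _ hjU
  have hmul : ((k + n : ℕ) : ℝ) * ε ≤ (n + (k + j : ℕ)) * ε := by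
    gcongr
    push_cast
    linarith [(j.cast_nonneg : (0 : ℝ) ≤ j)]
  linarith [hB k (by omega) (T^[j] x)]

end ReturnToSet

variable [TopologicalSpace X] [CompactSpace X]

theorem exists_forall_abs_le_add_mul (h : IsSubadditiveCocycle T f) (hf : ∀ n, Continuous (f n))
    (hT : Continuous T) (hmin : ∀ x, DenseRange fun n : ℕ => T^[n] x) {U : Set X}
    (hU_open : IsOpen U) (hU_ne : U.Nonempty) {M : ℕ} {ε : ℝ} (hε : 0 ≤ ε)
    (hU : ∀ n ≥ M, ∀ u ∈ U, |f n u| ≤ n * ε) :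
    ∃ C : ℝ, ∀ᶠ n : ℕ in atTop, ∀ x, |f n x| ≤ C + n * ε := by
  obtain ⟨N, hreturn⟩ := exists_iterate_mem_of_denseRange hT hmin hU_open hU_ne
  obtain ⟨B, hB⟩ : BddAbove (⋃ j ∈ Set.Iic N, Set.range (f j)) :=
    (Set.finite_Iic N).bddAbove_biUnion.2 fun j _ => (isCompact_range (hf j)).bddAbove
  replace hB : ∀ j ≤ N, ∀ x, f j x ≤ B := fun j hj x =>
    hB (Set.mem_biUnion hj (Set.mem_range_self x))
  refine ⟨B + N * ε, ?_⟩
  filter_upwards [eventually_ge_atTop (M + N)] with n hn x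
  -- The lower bound is only available on the range of `T^[N]`, which is dense.
  refine (denseRange_iterate hmin N).induction_on x
    (isClosed_le (hf n).abs continuous_const) fun y => abs_le.2 ⟨?_, ?_⟩
  · have := h.neg_le_apply_iterate_of_forall_mem (fun k hk u hu => (abs_le.1 (hU k hk u hu)).1)
      hB hε hreturn (show M ≤ n by omega) y
    linarith
  · have := h.le_add_mul_of_forall_mem (fun k hk u hu => (abs_le.1 (hU k hk u hu)).2)
      hB hε hreturn hn (T^[N] y)
    linarith [mul_nonneg N.cast_nonneg hε]

theorem eventually_abs_div_le (h : IsSubadditiveCocycle T f) (hf : ∀ n, Continuous (f n))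
    (hT : Continuous T) (hmin : ∀ x, DenseRange fun n : ℕ => T^[n] x) {U : Set X}
    (hU_open : IsOpen U) (hU_ne : U.Nonempty) {ε δ : ℝ} (hε : 0 ≤ ε) (hεδ : ε < δ)
    (hU : ∀ᶠ n : ℕ in atTop, ∀ u ∈ U, |f n u / n| ≤ ε) :
    ∀ᶠ n : ℕ in atTop, ∀ x, |f n x / n| ≤ δ := by
  have abs_div_le_iff {n : ℕ} (hn : 0 < n) (x : X) (η : ℝ) :
      |f n x / n| ≤ η ↔ |f n x| ≤ n * η := by
    rw [abs_div, Nat.abs_cast, div_le_iff₀' (Nat.cast_pos.2 hn)]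
  obtain ⟨M, hM⟩ := eventually_atTop.1 (hU.and (eventually_gt_atTop 0))
  obtain ⟨C, hC⟩ := h.exists_forall_abs_le_add_mul hf hT hmin hU_open hU_ne hε
    fun n hn u hu => (abs_div_le_iff (hM n hn).2 u ε).1 ((hM n hn).1 u hu)
  have hlinear : ∀ᶠ n : ℕ in atTop, C ≤ n * (δ - ε) :=
    (tendsto_natCast_atTop_atTop.atTop_mul_const (sub_pos.2 hεδ)).eventually_ge_atTop C
  filter_upwards [hC, hlinear, eventually_gt_atTop 0] with n hCn hn hn_pos x
  exact (abs_div_le_iff hn_pos x δ).2 (by linarith [hCn x])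

theorem exists_eventually_dist_div_le [BaireSpace X] (h : IsSubadditiveCocycle T f)
    (hf : ∀ n, Continuous (f n)) (hT : Continuous T)
    (hmin : ∀ x, DenseRange fun n : ℕ => T^[n] x)
    (hcauchy : ∀ x, CauchySeq fun n : ℕ => f n x / n) {ε : ℝ} (hε : 0 < ε) :
    ∃ c : ℝ, ∀ᶠ n : ℕ in atTop, ∀ x, dist (f n x / n) c ≤ ε := by
  rcases isEmpty_or_nonempty X with _ | _
  · exact ⟨0, .of_forall fun _ x => isEmptyElim x⟩
  obtain ⟨U, hU_open, hU_ne, c, hU⟩ := exists_isOpen_eventually_dist_le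
    (fun n => (hf n).div_const (n : ℝ)) hcauchy (half_pos hε)
  have hdist {n : ℕ} (hn : 0 < n) (x : X) :
      dist (f n x / n) c = |(f n x - n * c) / n| := by
    rw [Real.dist_eq, sub_div, mul_div_cancel_left₀ c (Nat.cast_ne_zero.2 hn.ne')]
  have hglobal : ∀ᶠ n : ℕ in atTop, ∀ x, |(f n x - n * c) / n| ≤ ε := by
    refine (h.sub_natCast_mul c).eventually_abs_div_le (fun n => (hf n).sub continuous_const)
      hT hmin hU_open hU_ne (half_pos hε).le (half_lt_self hε) ?_
    filter_upwards [hU, eventually_gt_atTop 0] with n hUn hn u hu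
    exact hdist hn u ▸ hUn u hu
  refine ⟨c, ?_⟩
  filter_upwards [hglobal, eventually_gt_atTop 0] with n hn hn_pos x
  exact hdist hn_pos x ▸ hn x

end IsSubadditiveCocycle

theorem statement0_general {X : Type*} [TopologicalSpace X] [CompactSpace X] [BaireSpace X]
    {T : X → X} (hT : Continuous T) (hmin : ∀ x, DenseRange fun n : ℕ => T^[n] x)
    {f : ℕ → X → ℝ} (hf : ∀ n, Continuous (f n)) (hsub : IsSubadditiveCocycle T f)
    {φ : X → ℝ} (hφ : ∀ x, Tendsto (fun n : ℕ => f n x / n) atTop (𝓝 (φ x))) :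
    (∀ x y, φ x = φ y) ∧ TendstoUniformly (fun (n : ℕ) x => f n x / n) φ atTop :=
  eq_and_tendstoUniformly_of_eventually_dist_le hφ fun _ hε =>
    hsub.exists_eventually_dist_div_le hf hT hmin (fun x => (hφ x).cauchySeq) hε

/-- On a compact metric minimal system, pointwise convergence of a
continuous subadditive sequence `f n / n` forces the limit to be constant and the
convergence to be uniform. -/
theorem statement0 {Ω : Type*} [MetricSpace Ω] [CompactSpace Ω] (T : Ω ≃ₜ Ω)
    (hmin : ∀ ω ρ : Ω, ρ ∈ closure (Set.range fun n : ℤ => (T.toEquiv ^ n) ω))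
    (f : ℕ → Ω → ℝ) (hf : ∀ n, Continuous (f n))
    (hsub : ∀ (ω : Ω) (n m : ℕ), f (n + m) ω ≤ f n ω + f m ((⇑T)^[n] ω))
    (φ : Ω → ℝ) (hφ : ∀ ω : Ω, Filter.Tendsto (fun n : ℕ => f n ω / n) Filter.atTop (nhds (φ ω))) :
    (∀ ω ρ : Ω, φ ω = φ ρ) ∧
      TendstoUniformly (fun (n : ℕ) (ω : Ω) => f n ω / n) φ Filter.atTop :=
  statement0_general T.continuous (denseRange_iterate_of_denseRange_zpow T hmin) hf hsub hφ
end

section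
/- Let (Ω,T) be a subshift over a finite alphabet satisfying the leading sequence condition (LSC), i.e., conditions (α), (β) and (γ) hold with leading words ω^(1),…,ω^(r). Then (Ω,T) has uniform word frequencies: for every v ∈ W(Ω) there exists ν(v) ∈ ℝ such that (1/n)·#_v(ω(1)⋯ω(n)) → ν(v) as n → ∞, uniformly in ω ∈ Ω, where #_v(w) denotes the number of occurrences of v in the finite word w. -/
open Filter Topology MeasureTheory

/-! For `f ≥ 0` locally constant, the diagonal cocycle generated by `diag (exp f, exp (-f))` has
log-norm equal to the Birkhoff sum of `f`, so (β) makes the forward and the backward Birkhoff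
averages of `f` converge to a common value `Λ` along all leading words. By (α) every long word of
`Ω` is read off a window of a leading word that touches the origin; cutting the window at the origin
splits its Birkhoff sum into a backward and a forward one, whence the averages over all such windows
are uniformly close to `Λ`. Word frequencies are the case of the indicator of an occurrence. -/

section Averages

open Asymptotics

variable {E : Type*} [SeminormedAddCommGroup E]

theorem exists_norm_le_mul_add_of_isLittleO_natCast {u : ℕ → E}
    (hu : u =o[atTop] (Nat.cast : ℕ → ℝ)) {ε : ℝ} (hε : 0 < ε) :
    ∃ C, ∀ n, ‖u n‖ ≤ ε * n + C := by
  have hev : ∀ᶠ n : ℕ in atTop, ‖u n‖ - ε * n ≤ 0 := by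
    filter_upwards [hu.bound hε] with n hn
    rw [Real.norm_natCast] at hn
    linarith
  obtain ⟨C, hC⟩ := (isBoundedUnder_of_eventually_le hev).bddAbove_range
  refine ⟨C, fun n => ?_⟩
  have := hC (Set.mem_range_self n)
  linarith

theorem eventually_norm_add_le_of_isLittleO_natCast {u w : ℕ → E}
    (hu : u =o[atTop] (Nat.cast : ℕ → ℝ)) (hw : w =o[atTop] (Nat.cast : ℕ → ℝ))
    {ε : ℝ} (hε : 0 < ε) :
    ∀ᶠ n : ℕ in atTop, ∀ k ≤ n, ‖u k + w (n - k)‖ ≤ ε * n := by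
  obtain ⟨C, hC⟩ := exists_norm_le_mul_add_of_isLittleO_natCast hu (half_pos hε)
  obtain ⟨D, hD⟩ := exists_norm_le_mul_add_of_isLittleO_natCast hw (half_pos hε)
  have hlarge : ∀ᶠ n : ℕ in atTop, C + D ≤ ε / 2 * n :=
    (tendsto_natCast_atTop_atTop.const_mul_atTop (half_pos hε)).eventually_ge_atTop _
  filter_upwards [hlarge] with n hn k hk
  calc ‖u k + w (n - k)‖ ≤ ‖u k‖ + ‖w (n - k)‖ := norm_add_le _ _
    _ ≤ (ε / 2 * k + C) + (ε / 2 * (n - k : ℕ) + D) := add_le_add (hC k) (hD _)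
    _ = ε / 2 * n + (C + D) := by push_cast [hk]; ring
    _ ≤ ε * n := by linarith

variable [NormedSpace ℝ E] {α : Type*} {T : α → α} {f : α → E} {L : E}

theorem isLittleO_birkhoffSum_sub_of_tendsto_birkhoffAverage {x : ℕ → α}
    (h : Tendsto (fun n => birkhoffAverage ℝ T f n (x n)) atTop (𝓝 L)) :
    (fun n : ℕ => birkhoffSum T f n (x n) - (n : ℝ) • L) =o[atTop] (Nat.cast : ℕ → ℝ) := by
  have hdiff : (fun n => birkhoffAverage ℝ T f n (x n) - L) =o[atTop] fun _ => (1 : ℝ) :=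
    (isLittleO_one_iff ℝ).2 (tendsto_sub_nhds_zero_iff.2 h)
  have hmul := (isBigO_refl (Nat.cast : ℕ → ℝ) atTop).smul_isLittleO hdiff
  simp only [smul_eq_mul, mul_one] at hmul
  refine hmul.congr' ?_ .rfl
  filter_upwards [eventually_ne_atTop 0] with n hn
  rw [birkhoffAverage, smul_sub, smul_inv_smul₀ (Nat.cast_ne_zero.2 hn)]

/-- The orbit segment of length `n` from `y k` passes through `x` at time `k ≤ n`; cut it there. -/
theorem eventually_dist_birkhoffAverage_lt {x : α} {y : ℕ → α} (hy : ∀ k, T^[k] (y k) = x)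
    (hfwd : Tendsto (fun n => birkhoffAverage ℝ T f n x) atTop (𝓝 L))
    (hbwd : Tendsto (fun n => birkhoffAverage ℝ T f n (y n)) atTop (𝓝 L))
    {ε : ℝ} (hε : 0 < ε) :
    ∀ᶠ n : ℕ in atTop, ∀ k ≤ n, dist (birkhoffAverage ℝ T f n (y k)) L < ε := by
  filter_upwards [eventually_norm_add_le_of_isLittleO_natCast
    (isLittleO_birkhoffSum_sub_of_tendsto_birkhoffAverage hbwd)
    (isLittleO_birkhoffSum_sub_of_tendsto_birkhoffAverage hfwd) (half_pos hε),
    eventually_gt_atTop 0] with n hn hn0 k hk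
  have hn0' : (0 : ℝ) < n := Nat.cast_pos.2 hn0
  have hcut : birkhoffSum T f n (y k) = birkhoffSum T f k (y k) + birkhoffSum T f (n - k) x := by
    rw [← hy k, ← birkhoffSum_add, Nat.add_sub_cancel' hk]
  have havg : birkhoffAverage ℝ T f n (y k) - L = (n : ℝ)⁻¹ •
      (birkhoffSum T f k (y k) - (k : ℝ) • L +
        (birkhoffSum T f (n - k) x - ((n - k : ℕ) : ℝ) • L)) := by
    rw [sub_add_sub_comm, ← hcut, ← add_smul, ← Nat.cast_add, Nat.add_sub_cancel' hk, smul_sub,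
      inv_smul_smul₀ hn0'.ne', birkhoffAverage]
  calc dist (birkhoffAverage ℝ T f n (y k)) L
      ≤ (n : ℝ)⁻¹ * (ε / 2 * n) := by
        rw [dist_eq_norm, havg, norm_smul, norm_inv, Real.norm_natCast]
        gcongr
        exact hn k hk
    _ = ε / 2 := by field_simp
    _ < ε := half_lt_self hε

end Averages

section DiagonalCocycle

/-- The hyperbolic diagonal matrix `diag (exp t, exp (-t))`, the one-parameter subgroup that encodes
additive cocycles into `SL(2, ℝ)`. -/
noncomputable def diagExp (t : ℝ) : SL2 :=
  ⟨Matrix.diagonal ![Real.exp t, Real.exp (-t)], by simp [Fin.prod_univ_two, ← Real.exp_add]⟩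

theorem diagExp_zero : diagExp 0 = 1 := by
  ext i j
  fin_cases i <;> fin_cases j <;> simp [diagExp]

theorem diagExp_add (s t : ℝ) : diagExp (s + t) = diagExp s * diagExp t := by
  ext i j
  rw [Matrix.SpecialLinearGroup.coe_mul]
  fin_cases i <;> fin_cases j <;> simp [diagExp, Real.exp_add, mul_comm]

theorem diagExp_neg (t : ℝ) : diagExp (-t) = (diagExp t)⁻¹ := by
  rw [eq_inv_iff_mul_eq_one, ← diagExp_add, neg_add_cancel, diagExp_zero]

open scoped Matrix.Norms.L2Operator in
theorem slNorm_diagExp (t : ℝ) : slNorm (diagExp t) = Real.exp |t| := by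
  have hdiag : slNorm (diagExp t) = ‖(![Real.exp t, Real.exp (-t)] : Fin 2 → ℝ)‖ := by
    rw [← Matrix.l2_opNorm_diagonal (𝕜 := ℝ), Matrix.l2_opNorm_def]
    rfl
  rw [hdiag, abs_eq_max_neg, Real.exp_monotone.map_max]
  simp [Pi.norm_def, Fin.univ_succ]

theorem log_slNorm_diagExp (t : ℝ) : Real.log (slNorm (diagExp t)) = |t| := by
  rw [slNorm_diagExp, Real.log_exp]

variable {𝒜 : Type*}

theorem shift_shift (k l : ℤ) (ω : ℤ → 𝒜) : shift k (shift l ω) = shift (k + l) ω :=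
  funext fun i => congrArg ω (add_assoc i k l)

theorem shift_zero (ω : ℤ → 𝒜) : shift 0 ω = ω :=
  funext fun i => congrArg ω (add_zero i)

theorem shift_one_iterate (n : ℕ) (ω : ℤ → 𝒜) : (shift 1)^[n] ω = shift n ω := by
  induction n with
  | zero => exact (shift_zero ω).symm
  | succ n ih => rw [Function.iterate_succ_apply', ih, shift_shift, Nat.cast_succ, add_comm]

theorem cocycle_natCast (A : (ℤ → 𝒜) → SL2) (n : ℕ) (ω : ℤ → 𝒜) :
    cocycle A n ω = cocycleP A n ω := by
  rw [cocycle, if_pos n.cast_nonneg, Int.toNat_natCast]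

theorem cocycle_neg_natCast (A : (ℤ → 𝒜) → SL2) (n : ℕ) (ω : ℤ → 𝒜) :
    cocycle A (-n) ω = (cocycleP A n (shift (-n) ω))⁻¹ := by
  rcases n.eq_zero_or_pos with rfl | hn
  · simp [cocycle, cocycleP]
  · rw [cocycle, if_neg (by omega), neg_neg, Int.toNat_natCast]

theorem cocycleP_diagExp (f : (ℤ → 𝒜) → ℝ) (n : ℕ) (ω : ℤ → 𝒜) :
    cocycleP (fun ρ => diagExp (f ρ)) n ω = diagExp (birkhoffSum (shift 1) f n ω) := by
  induction n with
  | zero => rw [birkhoffSum_zero, diagExp_zero, cocycleP]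
  | succ n ih =>
    rw [cocycleP, ih, ← diagExp_add, add_comm, birkhoffSum_succ, shift_one_iterate]

theorem LocConstOn.comp {Ω : Set (ℤ → 𝒜)} {β γ : Type*} {f : (ℤ → 𝒜) → β}
    (hf : LocConstOn Ω f) (g : β → γ) : LocConstOn Ω fun ω => g (f ω) := by
  obtain ⟨N, hN⟩ := hf
  exact ⟨N, fun ω hω ρ hρ h => congrArg g (hN ω hω ρ hρ h)⟩

theorem CondBeta.exists_tendsto_birkhoffAverage {Ω : Set (ℤ → 𝒜)} {r : ℕ}
    {lead : Fin r → (ℤ → 𝒜)} (hβ : CondBeta Ω lead) {f : (ℤ → 𝒜) → ℝ} (hf : LocConstOn Ω f)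
    (hf0 : 0 ≤ f) :
    ∃ Λ : ℝ, ∀ j,
      Tendsto (fun n => birkhoffAverage ℝ (shift 1) f n (lead j)) atTop (𝓝 Λ) ∧
      Tendsto (fun n : ℕ => birkhoffAverage ℝ (shift 1) f n (shift (-n) (lead j)))
        atTop (𝓝 Λ) := by
  obtain ⟨Λ, hΛ⟩ := hβ _ (hf.comp diagExp)
  have habs (n : ℕ) (ω : ℤ → 𝒜) :
      |birkhoffSum (shift 1) f n ω| / n = birkhoffAverage ℝ (shift 1) f n ω := by
    have hsum : 0 ≤ birkhoffSum (shift 1) f n ω := Finset.sum_nonneg fun _ _ => hf0 _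
    rw [abs_of_nonneg hsum, birkhoffAverage, smul_eq_mul, inv_mul_eq_div]
  refine ⟨Λ, fun j => ⟨(hΛ j).1.congr fun n => ?_, (hΛ j).2.congr fun n => ?_⟩⟩
  · rw [cocycle_natCast, cocycleP_diagExp, log_slNorm_diagExp, habs]
  · rw [cocycle_neg_natCast, cocycleP_diagExp, ← diagExp_neg, log_slNorm_diagExp, abs_neg, habs]

end DiagonalCocycle

section Occurrences

variable {𝒜 : Type*}

theorem word_eq_word_iff {ω ρ : ℤ → 𝒜} {k l : ℤ} {n : ℕ} :
    word ω k n = word ρ l n ↔ ∀ i < n, ω (k + i) = ρ (l + i) := by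
  simp [word, forall_comm (α := ℤ)]

theorem word_shift (ω : ℤ → 𝒜) (k l : ℤ) (n : ℕ) : word (shift l ω) k n = word ω (k + l) n :=
  word_eq_word_iff.2 fun i _ => congrArg ω (by ring)

theorem occursAt_shift {v : List 𝒜} {ω : ℤ → 𝒜} {k l : ℤ} :
    occursAt v (shift l ω) k ↔ occursAt v ω (k + l) := by
  rw [occursAt, occursAt, word_shift]

theorem occCount_congr {ω ρ : ℤ → 𝒜} {n : ℕ} (h : word ω 1 n = word ρ 1 n) (v : List 𝒜) :
    occCount v ω n = occCount v ρ n := by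
  rw [word_eq_word_iff] at h
  have hword (k : ℤ) (hk : 1 ≤ k) (hkn : k + v.length ≤ (n : ℤ) + 1) :
      word ω k v.length = word ρ k v.length :=
    word_eq_word_iff.2 fun i hi => by
      have hωρ := h (k - 1 + i).toNat (by omega)
      rwa [show (1 + (k - 1 + i).toNat : ℤ) = k + i by omega] at hωρ
  refine congrArg Set.ncard
    (Set.ext fun k => and_congr_right fun hk => and_congr_right fun hkn => ?_)
  rw [occursAt, occursAt, hword k hk hkn]

/-- The indicator function of the event that `v` occurs at position `1`, where `occCount` starts
counting. -/
noncomputable def occIndicator (v : List 𝒜) : (ℤ → 𝒜) → ℝ := {ω | occursAt v ω 1}.indicator 1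

theorem occIndicator_nonneg (v : List 𝒜) : 0 ≤ occIndicator v :=
  Set.indicator_nonneg fun _ _ => zero_le_one

theorem locConstOn_occIndicator (Ω : Set (ℤ → 𝒜)) (v : List 𝒜) :
    LocConstOn Ω (occIndicator v) := by
  classical
  refine ⟨v.length, fun ω _ ρ _ h => ?_⟩
  have hword : word ω 1 v.length = word ρ 1 v.length :=
    word_eq_word_iff.2 fun i hi => h _ (by rw [abs_of_nonneg] <;> omega)
  simp only [occIndicator, Set.indicator_apply, Set.mem_ofPred_eq, occursAt, hword, Pi.one_apply]

theorem birkhoffSum_occIndicator (v : List 𝒜) (ω : ℤ → 𝒜) (n : ℕ) :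
    birkhoffSum (shift 1) (occIndicator v) n ω =
      Set.ncard {k : ℤ | 1 ≤ k ∧ k ≤ n ∧ occursAt v ω k} := by
  classical
  have hset : {k : ℤ | 1 ≤ k ∧ k ≤ n ∧ occursAt v ω k} =
      ((Finset.range n).filter fun i : ℕ => occursAt v ω (1 + i)).image
        fun i : ℕ => (1 + i : ℤ) := by
    ext k
    simp only [Set.mem_ofPred_eq, Finset.coe_image, Set.mem_image, Finset.mem_coe,
      Finset.mem_filter, Finset.mem_range]
    constructor
    · rintro ⟨hk, hkn, hocc⟩
      obtain ⟨i, rfl⟩ := Int.le.dest hk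
      exact ⟨i, ⟨by omega, hocc⟩, rfl⟩
    · rintro ⟨i, ⟨hi, hocc⟩, rfl⟩
      exact ⟨by omega, by omega, hocc⟩
  rw [hset, Set.ncard_coe_finset, Finset.card_image_of_injective _ fun i j h => by simpa using h]
  simp [birkhoffSum, occIndicator, Set.indicator_apply, shift_one_iterate, occursAt_shift]

theorem dist_occCount_div_birkhoffAverage_le {v : List 𝒜} (hv : 1 ≤ v.length) (ω : ℤ → 𝒜) (n : ℕ) :
    dist ((occCount v ω n : ℝ) / n) (birkhoffAverage ℝ (shift 1) (occIndicator v) n ω) ≤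
      v.length / n := by
  rw [birkhoffAverage, birkhoffSum_occIndicator, smul_eq_mul, inv_mul_eq_div, Real.dist_eq,
    ← sub_div, abs_div, Nat.abs_cast, occCount]
  set s := {k : ℤ | 1 ≤ k ∧ k + v.length ≤ (n : ℤ) + 1 ∧ occursAt v ω k}
  set t := {k : ℤ | 1 ≤ k ∧ k ≤ n ∧ occursAt v ω k}
  have hst : s ⊆ t := fun k ⟨hk, hkn, hocc⟩ => ⟨hk, by omega, hocc⟩
  have hts : t ⊆ s ∪ Finset.Ioc (n - v.length : ℤ) n := fun k ⟨hk, hkn, hocc⟩ => by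
    by_cases hend : k + v.length ≤ (n : ℤ) + 1
    · exact .inl ⟨hk, hend, hocc⟩
    · exact .inr (Finset.mem_coe.2 (Finset.mem_Ioc.2 (by omega)))
  have ht : t.Finite := (Set.finite_Icc 1 (n : ℤ)).subset fun k hk => ⟨hk.1, hk.2.1⟩
  have hle : s.ncard ≤ t.ncard := Set.ncard_le_ncard hst ht
  have hge : t.ncard ≤ s.ncard + v.length := by
    calc t.ncard ≤ (s ∪ Finset.Ioc (n - v.length : ℤ) n).ncard :=
          Set.ncard_le_ncard hts ((ht.subset hst).union (Finset.finite_toSet _))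
      _ ≤ s.ncard + (Finset.Ioc (n - v.length : ℤ) n : Set ℤ).ncard := Set.ncard_union_le _ _
      _ = s.ncard + v.length := by rw [Set.ncard_coe_finset, Int.card_Ioc]; congr 1; omega
  gcongr
  rify at hle hge
  rw [abs_le]
  constructor <;> linarith

end Occurrences

theorem CondAlpha.eventually_exists_word_eq {𝒜 : Type*} {Ω : Set (ℤ → 𝒜)} {r : ℕ}
    {lead : Fin r → (ℤ → 𝒜)} (hα : CondAlpha Ω lead) :
    ∀ᶠ n : ℕ in atTop, ∀ ω ∈ Ω, ∃ j, ∃ k : ℕ, k ≤ n ∧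
      word ω 1 n = word (shift (-k) (lead j)) 1 n := by
  obtain ⟨-, N, hN⟩ := hα
  filter_upwards [eventually_ge_atTop N] with n hn ω hω
  have hword : word ω 1 n ∈ WordsN Ω n := ⟨ω, hω, 1, rfl⟩
  rw [hN n hn] at hword
  simpa only [word_shift, ← sub_eq_add_neg, Set.mem_ofPred_eq] using hword

theorem statement3_general {𝒜 : Type*} {Ω : Set (ℤ → 𝒜)} {r : ℕ} {lead : Fin r → (ℤ → 𝒜)}
    (hα : CondAlpha Ω lead) (hβ : CondBeta Ω lead) : UniformWordFreq Ω := by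
  intro v hv
  obtain ⟨Λ, hΛ⟩ :=
    hβ.exists_tendsto_birkhoffAverage (locConstOn_occIndicator Ω v) (occIndicator_nonneg v)
  refine ⟨Λ, Metric.tendstoUniformlyOn_iff.2 fun ε hε => ?_⟩
  have hwindows : ∀ᶠ n : ℕ in atTop, ∀ j, ∀ k : ℕ, k ≤ n →
      dist (birkhoffAverage ℝ (shift 1) (occIndicator v) n (shift (-k) (lead j))) Λ < ε / 2 :=
    eventually_all.2 fun j => eventually_dist_birkhoffAverage_lt
      (fun k => by rw [shift_one_iterate, shift_shift, add_neg_cancel, shift_zero])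
      (hΛ j).1 (hΛ j).2 (half_pos hε)
  have hlength : ∀ᶠ n : ℕ in atTop, (v.length : ℝ) / n < ε / 2 :=
    (tendsto_const_div_atTop_nhds_zero_nat _).eventually_lt_const (half_pos hε)
  filter_upwards [hα.eventually_exists_word_eq, hwindows, hlength] with n hword hn hvn ω hω
  obtain ⟨j, k, hk, hωk⟩ := hword ω hω
  calc dist Λ (occCount v ω n / n) = dist ((occCount v (shift (-k) (lead j)) n : ℝ) / n) Λ := by
        rw [dist_comm, occCount_congr hωk]
    _ ≤ v.length / n + dist _ Λ :=
        (dist_triangle _ _ _).trans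
          (add_le_add_left (dist_occCount_div_birkhoffAverage_le hv.1 _ n) _)
    _ < ε / 2 + ε / 2 := add_lt_add hvn (hn j k hk)
    _ = ε := add_halves ε

/-- A subshift satisfying the leading sequence condition (LSC) has
uniform word frequencies (is uniquely ergodic). -/
theorem statement3 {𝒜 : Type*} [Fintype 𝒜] [TopologicalSpace 𝒜] [DiscreteTopology 𝒜]
    {Ω : Set (ℤ → 𝒜)} (hΩ : IsSubshift Ω) (hLSC : SatisfiesLSC Ω) :
    UniformWordFreq Ω := by
  obtain ⟨r, lead, hα, hβ, -⟩ := hLSC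
  exact statement3_general hα hβ
end

section
/- Let (Ω,T) be a subshift over a finite alphabet, ω ∈ Ω and p := ω(1)ω(2)⋯ the one-sided word given by the restriction of ω to {1,2,…}. Let F : W(Ω) → ℝ be subadditive with asymptotic mean F̄. Assume (i) p satisfies condition (PQ), and (ii) there is a sequence (p^(n)) of prefixes of p with |p^(n)| → ∞ and F(p^(n))/|p^(n)| → F̄. Then lim_{n→∞} F(p(1)⋯p(n))/n exists and equals F̄. -/
open Filter Topology MeasureTheory

/-!
Every long word of `Ω` has mean at most slightly above `F̄`, so the excess `F x - s |x|` over a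
slope `s` just above `F̄` is bounded above. If the claim failed, there would be arbitrarily long
prefixes `v` of `p` with mean at most `F̄ - ε`. By (PQ) a fixed proportion of each long prefix of
`p` is covered by disjoint copies of `v`, and each copy, together with the gap following it, makes
the excess drop by at least `ε |v| / 2`. By subadditivity all sufficiently long prefixes then have
mean at most `F̄ - ε'` for a fixed `ε' > 0`, which contradicts the convergence along the
prefixes `p^(n)`.
-/

theorem length_word {𝒜 : Type*} (ω : ℤ → 𝒜) (k : ℤ) (n : ℕ) : (word ω k n).length = n := by
  simp [word]

theorem word_add {𝒜 : Type*} (ω : ℤ → 𝒜) (k : ℤ) (a b : ℕ) :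
    word ω k (a + b) = word ω k a ++ word ω (k + a) b := by
  simp [word, List.range_add, List.map_flatMap, List.flatMap_map, add_assoc]

theorem word_mem_words {𝒜 : Type*} {Ω : Set (ℤ → 𝒜)} {ω : ℤ → 𝒜} (hω : ω ∈ Ω) (k : ℤ) {n : ℕ}
    (hn : n ≠ 0) : word ω k n ∈ Words Ω :=
  ⟨by rw [length_word]; exact Nat.one_le_iff_ne_zero.2 hn, ω, hω, k, by rw [length_word]⟩

theorem finite_wordsN {𝒜 : Type*} [Finite 𝒜] (Ω : Set (ℤ → 𝒜)) (n : ℕ) : (WordsN Ω n).Finite := by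
  refine (List.finite_length_eq 𝒜 n).subset ?_
  rintro _ ⟨ω, -, k, rfl⟩
  exact length_word ω k n

theorem le_card_nsmul_of_separated {G : Type*} [AddCommMonoid G] [PartialOrder G]
    [IsOrderedAddMonoid G] {H : ℤ → ℕ → G} (hH : ∀ k a b, H k (a + b) ≤ H k a + H (k + a) b)
    {C d : G} (hC : ∀ k n, H k n ≤ C) {N : ℕ} {i : ℤ} (S : Finset ℤ) {n : ℕ}
    (hS : ∀ k ∈ S, i ≤ k ∧ k + N ≤ i + n ∧ H k N ≤ d)
    (hsep : (S : Set ℤ).Pairwise fun k l => (N : ℤ) ≤ |k - l|) :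
    H i n ≤ S.card • (C + d) + C := by
  induction S using Finset.induction_on_max generalizing n with
  | empty => simpa using hC i n
  | insert k S hmax ih =>
    obtain ⟨hik, hkn, hkd⟩ := hS k (Finset.mem_insert_self k S)
    obtain ⟨a, rfl⟩ : ∃ a : ℕ, k = i + a := ⟨(k - i).toNat, by omega⟩
    obtain ⟨b, rfl⟩ : ∃ b : ℕ, n = a + (N + b) := ⟨n - a - N, by omega⟩
    have hleft : H i a ≤ S.card • (C + d) + C := by
      refine ih (fun l hl => ?_) (hsep.mono (by simp))
      obtain ⟨hil, -, hld⟩ := hS l (Finset.mem_insert_of_mem hl)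
      have hlt := hmax l hl
      have hgap : (N : ℤ) ≤ |i + a - l| :=
        hsep (Finset.mem_insert_self _ S) (Finset.mem_insert_of_mem hl) hlt.ne'
      rw [abs_of_pos (sub_pos.2 hlt)] at hgap
      exact ⟨hil, by omega, hld⟩
    calc H i (a + (N + b)) ≤ H i a + (H (i + a) N + H (i + a + N) b) :=
          (hH _ _ _).trans (by gcongr; exact hH _ _ _)
      _ ≤ (S.card • (C + d) + C) + (d + C) := by gcongr; exact hC _ _
      _ = (insert (i + (a : ℤ)) S).card • (C + d) + C := by
          rw [Finset.card_insert_of_notMem fun h => (hmax _ h).false, succ_nsmul]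
          abel

theorem exists_finset_card_eq_disjCount {𝒜 : Type*} (v : List 𝒜) (ω : ℤ → 𝒜) (n : ℕ) :
    ∃ S : Finset ℤ, S.card = disjCount v ω n ∧
      (∀ k ∈ S, 1 ≤ k ∧ k + v.length ≤ (n : ℤ) + 1 ∧ occursAt v ω k) ∧
      (S : Set ℤ).Pairwise fun k l => (v.length : ℤ) ≤ |k - l| := by
  refine Nat.sSup_mem (s := {m : ℕ | ∃ S : Finset ℤ, S.card = m ∧
    (∀ k ∈ S, 1 ≤ k ∧ k + v.length ≤ (n : ℤ) + 1 ∧ occursAt v ω k) ∧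
    ∀ k ∈ S, ∀ l ∈ S, k ≠ l → (v.length : ℤ) ≤ |k - l|}) ⟨0, ∅, by simp⟩ ⟨n + 1, ?_⟩
  rintro _ ⟨S, rfl, hS, -⟩
  have hsub : S ⊆ Finset.Icc 1 ((n : ℤ) + 1) := fun k hk => by
    obtain ⟨hk₁, hk₂, -⟩ := hS k hk
    exact Finset.mem_Icc.2 ⟨hk₁, by omega⟩
  simpa using Finset.card_le_card hsub

theorem eventually_mul_lt_mul_disjCount {𝒜 : Type*} {v : List 𝒜} {ω : ℤ → 𝒜} {m : ℕ} {b : ℝ}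
    (hb : b < liminf (fun n : ℕ => (m : ℝ) / n * disjCount v ω n) atTop) :
    ∀ᶠ n : ℕ in atTop, b * n < m * disjCount v ω n := by
  have hbdd : IsBoundedUnder (· ≥ ·) atTop fun n : ℕ => (m : ℝ) / n * disjCount v ω n :=
    isBoundedUnder_of ⟨0, fun n => by positivity⟩
  filter_upwards [eventually_lt_of_lt_liminf hb hbdd, eventually_gt_atTop 0] with n hn hn₀
  rwa [div_mul_eq_mul_div, lt_div_iff₀ (by exact_mod_cast hn₀)] at hn

/-- The excess `F x - s |x|` over the slope `s` of the word `x = ω(k)⋯ω(k+n-1)`. It is set to `0`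
on the empty word, where subadditivity on `W(Ω)` says nothing about `F`, so that splitting a word
into possibly empty pieces never decreases the total excess. -/
noncomputable def excess {𝒜 : Type*} (F : List 𝒜 → ℝ) (s : ℝ) (ω : ℤ → 𝒜) (k : ℤ) (n : ℕ) : ℝ :=
  if n = 0 then 0 else F (word ω k n) - s * n

theorem excess_zero {𝒜 : Type*} (F : List 𝒜 → ℝ) (s : ℝ) (ω : ℤ → 𝒜) (k : ℤ) :
    excess F s ω k 0 = 0 :=
  if_pos rfl

theorem excess_of_ne_zero {𝒜 : Type*} (F : List 𝒜 → ℝ) (s : ℝ) (ω : ℤ → 𝒜) (k : ℤ) {n : ℕ}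
    (hn : n ≠ 0) : excess F s ω k n = F (word ω k n) - s * n :=
  if_neg hn

theorem excess_le_mul_iff {𝒜 : Type*} (F : List 𝒜 → ℝ) (s : ℝ) (ω : ℤ → 𝒜) (k : ℤ) {n : ℕ}
    (hn : n ≠ 0) (r : ℝ) :
    excess F s ω k n ≤ r * n ↔ F (word ω k n) / n ≤ s + r := by
  rw [excess_of_ne_zero F s ω k hn, div_le_iff₀ (Nat.cast_pos.2 (Nat.pos_of_ne_zero hn)),
    sub_le_iff_le_add', add_mul]

theorem excess_congr {𝒜 : Type*} (F : List 𝒜 → ℝ) (s : ℝ) {ω : ℤ → 𝒜} {k l : ℤ} {n : ℕ}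
    (h : word ω k n = word ω l n) : excess F s ω k n = excess F s ω l n := by
  simp only [excess, h]

namespace SubadditiveOn

variable {𝒜 : Type*} {Ω : Set (ℤ → 𝒜)} {F : List 𝒜 → ℝ} {ω : ℤ → 𝒜}

theorem excess_add_le (hF : SubadditiveOn Ω F) (hω : ω ∈ Ω) (s : ℝ) (k : ℤ) (a b : ℕ) :
    excess F s ω k (a + b) ≤ excess F s ω k a + excess F s ω (k + a) b := by
  rcases eq_or_ne a 0 with rfl | ha
  · simp [excess_zero]
  rcases eq_or_ne b 0 with rfl | hb
  · simp [excess_zero]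
  have hab : a + b ≠ 0 := by omega
  have hsplit := hF _ _ (word_mem_words hω k ha) (word_mem_words hω (k + a) hb)
    (word_add ω k a b ▸ word_mem_words hω k hab)
  rw [← word_add] at hsplit
  rw [excess_of_ne_zero _ _ _ _ ha, excess_of_ne_zero _ _ _ _ hb, excess_of_ne_zero _ _ _ _ hab]
  push_cast
  linarith

theorem le_mul_of_letters_le (hF : SubadditiveOn Ω F) {B : ℝ} (hB : ∀ x ∈ WordsN Ω 1, F x ≤ B)
    {n : ℕ} (hn : 1 ≤ n) {x : List 𝒜} (hx : x ∈ WordsN Ω n) : F x ≤ B * n := by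
  obtain ⟨ρ, hρ, k, rfl⟩ := hx
  induction n, hn using Nat.le_induction with
  | base => simpa using hB _ ⟨ρ, hρ, k, rfl⟩
  | succ n hn ih =>
    have hn₀ : n ≠ 0 := by omega
    have hsplit := hF _ _ (word_mem_words hρ k hn₀) (word_mem_words hρ (k + n) one_ne_zero)
      (word_add ρ k n 1 ▸ word_mem_words hρ k n.succ_ne_zero)
    have hletter := hB _ ⟨ρ, hρ, k + n, rfl⟩
    rw [← word_add] at hsplit
    push_cast
    linarith

theorem eventually_forall_le_mul (hF : SubadditiveOn Ω F) (hbdd : BddAbove (F '' WordsN Ω 1))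
    {Fb s : ℝ} (hFb : IsAsympMean Ω F Fb) (hs : Fb < s) :
    ∀ᶠ n : ℕ in atTop, ∀ x ∈ WordsN Ω n, F x ≤ s * n := by
  obtain ⟨B, hB⟩ := hbdd
  filter_upwards [hFb.eventually_lt_const hs, eventually_ge_atTop 1] with n hsup hn x hx
  have hn₀ : (0 : ℝ) < n := by exact_mod_cast hn
  have hbddn : BddAbove ((fun x => F x / n) '' WordsN Ω n) := by
    refine ⟨B, ?_⟩
    rintro _ ⟨y, hy, rfl⟩
    exact (div_le_iff₀ hn₀).2 (hF.le_mul_of_letters_le (fun z hz => hB ⟨z, hz, rfl⟩) hn hy)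
  exact (div_le_iff₀ hn₀).1 ((le_csSup hbddn ⟨x, hx, rfl⟩).trans hsup.le)

theorem exists_excess_le (hF : SubadditiveOn Ω F) (hbdd : BddAbove (F '' WordsN Ω 1)) (hω : ω ∈ Ω)
    {Fb s : ℝ} (hFb : IsAsympMean Ω F Fb) (hs : Fb < s) :
    ∃ C : ℝ, ∀ k n, excess F s ω k n ≤ C := by
  obtain ⟨M, hM⟩ := eventually_atTop.1 (hF.eventually_forall_le_mul hbdd hFb hs)
  obtain ⟨B, hB⟩ := hbdd
  refine ⟨|B - s| * M, fun k n => ?_⟩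
  rcases eq_or_ne n 0 with rfl | hn
  · rw [excess_zero]
    positivity
  have hword : word ω k n ∈ WordsN Ω n := ⟨ω, hω, k, rfl⟩
  rw [excess_of_ne_zero _ _ _ _ hn]
  rcases le_total M n with hMn | hnM
  · exact (sub_nonpos.2 (hM n hMn _ hword)).trans (by positivity)
  · have hle : F (word ω k n) ≤ B * n :=
      hF.le_mul_of_letters_le (fun x hx => hB ⟨x, hx, rfl⟩) (Nat.one_le_iff_ne_zero.2 hn) hword
    calc F (word ω k n) - s * n ≤ (B - s) * n := by linarith
      _ ≤ |B - s| * M := by gcongr; exact le_abs_self _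

theorem excess_le_disjCount_mul (hF : SubadditiveOn Ω F) (hω : ω ∈ Ω) {s C : ℝ}
    (hC : ∀ k n, excess F s ω k n ≤ C) (i : ℤ) (N n : ℕ) :
    excess F s ω 1 n ≤ disjCount (word ω i N) ω n * (C + excess F s ω i N) + C := by
  obtain ⟨S, hcard, hocc, hsep⟩ := exists_finset_card_eq_disjCount (word ω i N) ω n
  simp only [length_word, occursAt] at hocc hsep
  rw [← hcard, ← nsmul_eq_mul]
  refine le_card_nsmul_of_separated (hF.excess_add_le hω s) hC S (fun k hk => ?_) hsep
  obtain ⟨hk₁, hkn, hword⟩ := hocc k hk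
  exact ⟨hk₁, by omega, (excess_congr F s hword.symm).le⟩

/-- The constant `8` collects three halvings: one absorbs the bound `C` on the gap after each copy,
one gives a strict inequality below the `liminf`, and one absorbs the final additive `C`. -/
theorem eventually_excess_le_of_frequently (hF : SubadditiveOn Ω F) (hω : ω ∈ Ω) {s C c ε : ℝ}
    (hC : ∀ k n, excess F s ω k n ≤ C) (hc : 0 < c) (hε : 0 < ε)
    (hPQ : ∀ m : ℕ, 1 ≤ m →
      c ≤ liminf (fun n : ℕ => (m : ℝ) / n * disjCount (word ω 1 m) ω n) atTop)
    (hfreq : ∃ᶠ N : ℕ in atTop, excess F s ω 1 N ≤ -ε * N) :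
    ∀ᶠ n : ℕ in atTop, excess F s ω 1 n ≤ -(c * ε / 8) * n := by
  have hC_le (r : ℝ) (hr : 0 < r) : ∀ᶠ n : ℕ in atTop, C ≤ r * n :=
    (tendsto_natCast_atTop_atTop.const_mul_atTop hr).eventually_ge_atTop C
  obtain ⟨N, hexcess, hCN, hN⟩ :=
    (hfreq.and_eventually ((hC_le (ε / 2) (half_pos hε)).and (eventually_ge_atTop 1))).exists
  have hcover := eventually_mul_lt_mul_disjCount ((half_lt_self hc).trans_le (hPQ N hN))
  filter_upwards [hcover, hC_le (c * ε / 8) (by positivity)] with n hn hCn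
  set D : ℝ := ↑(disjCount (word ω 1 N) ω n)
  calc excess F s ω 1 n ≤ D * (C + excess F s ω 1 N) + C := hF.excess_le_disjCount_mul hω hC 1 N n
    _ ≤ D * (-(ε / 2) * N) + C := by gcongr; linarith
    _ = -(ε / 2) * (N * D) + C := by ring
    _ ≤ -(ε / 2) * (c / 2 * n) + C := by
        have := mul_le_mul_of_nonneg_left hn.le (half_pos hε).le
        linarith
    _ ≤ -(c * ε / 8) * n := by linarith

theorem exists_eventually_div_le_of_frequently (hF : SubadditiveOn Ω F)
    (hbdd : BddAbove (F '' WordsN Ω 1)) (hω : ω ∈ Ω) {Fb a : ℝ} (hFb : IsAsympMean Ω F Fb)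
    (hPQ : CondPQ ω) (ha : a < Fb) (hfreq : ∃ᶠ n : ℕ in atTop, F (word ω 1 n) / n ≤ a) :
    ∃ b < Fb, ∀ᶠ n : ℕ in atTop, F (word ω 1 n) / n ≤ b := by
  obtain ⟨c, hc, hPQ⟩ := hPQ
  have hε : 0 < Fb - a := sub_pos.2 ha
  have hδ : 0 < c * (Fb - a) / 16 := by positivity
  set s := Fb + c * (Fb - a) / 16 with hs
  obtain ⟨C, hC⟩ := hF.exists_excess_le hbdd hω hFb (show Fb < s by linarith)
  have hlow : ∃ᶠ n : ℕ in atTop, excess F s ω 1 n ≤ -(Fb - a) * n := by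
    refine (hfreq.and_eventually (eventually_ne_atTop 0)).mono fun n ⟨hn, hn₀⟩ => ?_
    exact (excess_le_mul_iff F s ω 1 hn₀ _).2 (hn.trans (by linarith))
  refine ⟨s - c * (Fb - a) / 8, by linarith, ?_⟩
  filter_upwards [hF.eventually_excess_le_of_frequently hω hC hc hε hPQ hlow,
    eventually_ne_atTop 0] with n hn hn₀
  exact (excess_le_mul_iff F s ω 1 hn₀ _).1 hn

end SubadditiveOn

theorem statement7_general {𝒜 : Type*} {Ω : Set (ℤ → 𝒜)} (ω : ℤ → 𝒜) (hω : ω ∈ Ω)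
    (F : List 𝒜 → ℝ) (hF : SubadditiveOn Ω F) (hbdd : BddAbove (F '' WordsN Ω 1))
    (Fb : ℝ) (hFb : IsAsympMean Ω F Fb) (hPQ : CondPQ ω)
    (hpref : ∃ m : ℕ → ℕ, Tendsto m atTop atTop ∧
      Tendsto (fun n : ℕ => F (word ω 1 (m n)) / (m n)) atTop (𝓝 Fb)) :
    Tendsto (fun n : ℕ => F (word ω 1 n) / n) atTop (𝓝 Fb) := by
  refine tendsto_order.2 ⟨fun a ha => ?_, fun a ha => ?_⟩
  · by_contra hfreq
    obtain ⟨b, hb, hle⟩ := hF.exists_eventually_div_le_of_frequently hbdd hω hFb hPQ ha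
      ((not_eventually.1 hfreq).mono fun _ => le_of_not_gt)
    obtain ⟨m, hm, hlim⟩ := hpref
    exact hb.not_ge (le_of_tendsto hlim (hm.eventually hle))
  · obtain ⟨s, hs, hsa⟩ := exists_between ha
    filter_upwards [hF.eventually_forall_le_mul hbdd hFb hs, eventually_gt_atTop 0] with n hn hn₀
    exact ((div_le_iff₀ (by exact_mod_cast hn₀)).2 (hn _ ⟨ω, hω, 1, rfl⟩)).trans_lt hsa

/-- If the one-sided word `p = ω(1)ω(2)⋯` satisfies (PQ) and a
subadditive `F` attains its asymptotic mean `F̄` along some sequence of prefixes of `p`,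
then `F(p(1)⋯p(n))/n → F̄`. -/
theorem statement7 {𝒜 : Type*} [Fintype 𝒜] [TopologicalSpace 𝒜] [DiscreteTopology 𝒜]
    {Ω : Set (ℤ → 𝒜)} (hΩ : IsSubshift Ω) (ω : ℤ → 𝒜) (hω : ω ∈ Ω)
    (F : List 𝒜 → ℝ) (hF : SubadditiveOn Ω F) (Fb : ℝ) (hFb : IsAsympMean Ω F Fb)
    (hPQ : CondPQ ω)
    (hpref : ∃ m : ℕ → ℕ, Filter.Tendsto m Filter.atTop Filter.atTop ∧
      Filter.Tendsto (fun n : ℕ => F (word ω 1 (m n)) / (m n)) Filter.atTop (nhds Fb)) :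
    Filter.Tendsto (fun n : ℕ => F (word ω 1 n) / n) Filter.atTop (nhds Fb) :=
  statement7_general ω hω F hF ((finite_wordsN Ω 1).image F).bddAbove Fb hFb hPQ hpref
end
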